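/- Let X = ⟨x_n : n ∈ ω⟩ be a sequence of elements of ω^ω and let W = (F, I) be a shrink wrapper for X. For each n ∈ ω let T_n := ⋂{⋃_{s ∈ 2^ñ} F_{ñ,n}(s) : ñ ∈ ω and n ∈ η(ñ)}. Let e : ω → ω be any function such that for all n₁ < n₂ with {n₁, n₂} = η(ñ) and all s₁, s₂ ∈ 2^ñ with [F_{ñ,n₁}(s₁)] ∩ [F_{ñ,n₂}(s₂)] = ∅, every y₁ ∈ [F_{ñ,n₁}(s₁)] and y₂ ∈ [F_{ñ,n₂}(s₂)] differ at some coordinate below e(n₂). Define g : ω^ω → ω^ω by g(x)(n) := max{Exit(T_n)(x), e(n), n}. Then for every x ∈ ω^ω, f_X(x) ≤* g(x). -/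

import Mathlib

/-- The initial segment `x ↾ l` of `x ∈ ω^ω`, as an element of `ω^{<ω}`. -/
def seg (x : ℕ → ℕ) (l : ℕ) : List ℕ := (List.range l).map x

/-- A tree: a set of finite sequences of naturals closed under initial segments. -/
def IsTree (T : Set (List ℕ)) : Prop := ∀ s ∈ T, ∀ t : List ℕ, t <+: s → t ∈ T

/-- `[T]`: the set of infinite paths through `T`, i.e. those `x ∈ ω^ω` all of whose
finite initial segments belong to `T`. -/
def Branches (T : Set (List ℕ)) : Set (ℕ → ℕ) := {x | ∀ l, seg x l ∈ T}

/-- A tree is leafless if every element has a proper extension in the tree. -/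
def Leafless (T : Set (List ℕ)) : Prop := ∀ t ∈ T, ∃ n : ℕ, t ++ [n] ∈ T

/-- `T` obeys `f` iff for each level `l`, the set of `n` such that `t⌢n ∈ T` for some
`t ∈ T` of length `l` has size at most `f l`. -/
def Obeys (T : Set (List ℕ)) (f : ℕ → ℕ) : Prop :=
  ∀ l : ℕ, ∃ S : Finset ℕ, S.card ≤ f l ∧
    ∀ n : ℕ, (∃ t ∈ T, t.length = l ∧ t ++ [n] ∈ T) → n ∈ S

/-- `Exit(T)(x)`: the least `l` with `x ↾ l ∉ T` if `x ∉ [T]`, and `0` if `x ∈ [T]`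
(in which case the set below is empty and `sInf ∅ = 0`). -/
noncomputable def exitLevel (T : Set (List ℕ)) (x : ℕ → ℕ) : ℕ := sInf {l | seg x l ∉ T}

/-- `f_X(x)(n)`: the least `l` with `x l ≠ x_n l` if `x ≠ x_n`, and `0` otherwise
(in which case the set below is empty and `sInf ∅ = 0`). -/
noncomputable def fSeq (X : ℕ → ℕ → ℕ) (x : ℕ → ℕ) (n : ℕ) : ℕ := sInf {l | x l ≠ X n l}

/-- A shrink wrapper `(F, I)` for a sequence `X = ⟨x_n : n ∈ ω⟩` of elements of `ω^ω`,
relative to the fixed bijection `η : ω → [ω]²`, the family `f_i` (with `(i,l) ↦ f_i l`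
finite-to-one) and the finite-to-one function `Φ : 2^{<ω} × ω → ω`:
(1) for `n ∈ η nn` and `s ∈ 2^nn`, `F nn n s` is a leafless tree obeying `f_{Φ(s,n)}`;
(2) for each `nn` and `n ∈ η nn` there is `s ∈ 2^nn` with `x_n ∈ [F nn n s]`;
(3) for `{n₁, n₂} = η nn` and `s₁, s₂ ∈ 2^nn`, writing `C₁ = [F nn n₁ s₁]`,
`C₂ = [F nn n₂ s₂]`, one of:
(3a) `C₁ = C₂` and if `x_{n₁} ∈ C₁` or `x_{n₂} ∈ C₂` then `x_{n₁} = x_{n₂}`;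
(3b) there is `x ∈ I n₁ ∩ I n₂` with `C₁ = C₂ = {x}`;
(3c) `C₁ ∩ C₂ = ∅`. -/
def ShrinkWrapper (η : ℕ → Finset ℕ) (f : ℕ → ℕ → ℕ) (Φ : List Bool → ℕ → ℕ)
    (X : ℕ → ℕ → ℕ) (F : ℕ → ℕ → List Bool → Set (List ℕ))
    (I : ℕ → Set (ℕ → ℕ)) : Prop :=
  (∀ n, (I n).Finite) ∧
  (∀ nn n : ℕ, ∀ s : List Bool, n ∈ η nn → s.length = nn →
    IsTree (F nn n s) ∧ Leafless (F nn n s) ∧ Obeys (F nn n s) (f (Φ s n))) ∧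
  (∀ nn n : ℕ, n ∈ η nn → ∃ s : List Bool, s.length = nn ∧ X n ∈ Branches (F nn n s)) ∧
  (∀ nn n₁ n₂ : ℕ, ∀ s₁ s₂ : List Bool, η nn = {n₁, n₂} → n₁ ≠ n₂ →
    s₁.length = nn → s₂.length = nn →
    (Branches (F nn n₁ s₁) = Branches (F nn n₂ s₂) ∧
      ((X n₁ ∈ Branches (F nn n₁ s₁) ∨ X n₂ ∈ Branches (F nn n₂ s₂)) → X n₁ = X n₂)) ∨
    (∃ x ∈ I n₁ ∩ I n₂, Branches (F nn n₁ s₁) = {x} ∧ Branches (F nn n₂ s₂) = {x}) ∨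
    (Branches (F nn n₁ s₁) ∩ Branches (F nn n₂ s₂) = ∅))

/-!
If `x` is a branch of no `T_n`, then, since `x_n` is a branch of `T_n`, `x` must disagree with `x_n`
before it leaves `T_n`. Otherwise let `x` be a branch of `T_m`, let `n > m` and `{m, n} = η k`. As
`2^k` is finite, `x` is a branch of a single tree `F k m s₁`, while `x_n` is a branch of some
`F k n s₂`, and the three cases for these two trees say: `x_m = x_n`, so `f_X(x)(n)` is the constant
`f_X(x)(m)`, which is at most `n` for large `n`; or `x = x_n` and `f_X(x)(n) = 0`; or `x` and `x_n`
already differ below `e n`.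
-/

open Filter Set

theorem seg_isPrefix_seg (x : ℕ → ℕ) {a b : ℕ} (h : a ≤ b) : seg x a <+: seg x b := by
  obtain ⟨c, rfl⟩ := Nat.exists_eq_add_of_le h
  rw [seg, seg, List.range_add, List.map_append]
  exact List.prefix_append _ _

theorem seg_congr {x y : ℕ → ℕ} {l : ℕ} (h : ∀ i < l, x i = y i) : seg x l = seg y l :=
  List.map_congr_left fun i hi => h i (List.mem_range.1 hi)

theorem branches_mono {T T' : Set (List ℕ)} (h : T ⊆ T') : Branches T ⊆ Branches T' :=
  fun _ hx l => h (hx l)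

theorem IsTree.eventually_seg_notMem {T : Set (List ℕ)} (hT : IsTree T) {x : ℕ → ℕ}
    (hx : x ∉ Branches T) : ∀ᶠ l in atTop, seg x l ∉ T := by
  obtain ⟨l₀, hl₀⟩ : ∃ l, seg x l ∉ T := not_forall.1 hx
  filter_upwards [eventually_ge_atTop l₀] with l hl hmem
  exact hl₀ (hT _ hmem _ (seg_isPrefix_seg x hl))

theorem branches_biUnion {σ : Type*} {S : Set σ} (hS : S.Finite) {G : σ → Set (List ℕ)}
    (hG : ∀ s ∈ S, IsTree (G s)) : Branches (⋃ s ∈ S, G s) = ⋃ s ∈ S, Branches (G s) := by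
  refine Subset.antisymm (fun x hx => ?_)
    (iUnion₂_subset fun s hs => branches_mono (subset_biUnion_of_mem hs))
  by_contra hcon
  have hleave : ∀ s ∈ S, ∀ᶠ l in atTop, seg x l ∉ G s := fun s hs =>
    (hG s hs).eventually_seg_notMem fun hxs => hcon (mem_biUnion hs hxs)
  obtain ⟨l, hl⟩ := ((eventually_all_finite hS).2 hleave).exists
  obtain ⟨s, hs, hmem⟩ := mem_iUnion₂.1 (hx l)
  exact hl s hs hmem

theorem seg_exitLevel_notMem {T : Set (List ℕ)} {x : ℕ → ℕ} (hx : x ∉ Branches T) :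
    seg x (exitLevel T x) ∉ T :=
  Nat.sInf_mem (s := {l | seg x l ∉ T}) (not_forall.1 hx)

section fSeq

variable {X : ℕ → ℕ → ℕ} {x : ℕ → ℕ} {n : ℕ}

theorem eq_of_lt_fSeq {i : ℕ} (h : i < fSeq X x n) : x i = X n i :=
  not_not.1 (Nat.notMem_of_lt_sInf h)

theorem fSeq_le_of_ne {i : ℕ} (h : x i ≠ X n i) : fSeq X x n ≤ i :=
  Nat.sInf_le h

theorem fSeq_eq_zero_of_eq (h : x = X n) : fSeq X x n = 0 := by
  simp [fSeq, h]

theorem fSeq_le_exitLevel {T : Set (List ℕ)} (hX : X n ∈ Branches T) (hx : x ∉ Branches T) :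
    fSeq X x n ≤ exitLevel T x := by
  by_contra! hlt
  have hseg : seg x (exitLevel T x) = seg (X n) (exitLevel T x) :=
    seg_congr fun _ hi => eq_of_lt_fSeq (hi.trans hlt)
  exact seg_exitLevel_notMem hx (hseg ▸ hX _)

end fSeq

/-- A relaxed shrink wrapper for `X`: each block `η k` is a set of indices, in place of a pair, its
trees are labelled by a finite set `S k`, in place of `2^k`, and may branch arbitrarily or have
leaves. The alternatives in the last field are weak forms of (3a), (3b) and (3c). -/
structure WeakShrinkWrapper {κ σ : Type*} (η : κ → Set ℕ) (S : κ → Set σ) (X : ℕ → ℕ → ℕ)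
    (F : κ → ℕ → σ → Set (List ℕ)) : Prop where
  finite_labels : ∀ k, (S k).Finite
  isTree : ∀ ⦃k n s⦄, n ∈ η k → s ∈ S k → IsTree (F k n s)
  exists_mem_branches : ∀ ⦃k n⦄, n ∈ η k → ∃ s ∈ S k, X n ∈ Branches (F k n s)
  eq_or_subsingleton_or_disjoint : ∀ ⦃k m n s₁ s₂⦄, m ∈ η k → n ∈ η k → m < n →
    s₁ ∈ S k → s₂ ∈ S k →
    (X n ∈ Branches (F k n s₂) → X m = X n) ∨
    (Branches (F k m s₁) ∪ Branches (F k n s₂)).Subsingleton ∨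
    Disjoint (Branches (F k m s₁)) (Branches (F k n s₂))

/-- The tree `T_n`: the intersection, over all blocks `η k` containing `n`, of the union of the
trees wrapping `x_n` in that block. -/
def wrapTree {κ σ : Type*} (η : κ → Set ℕ) (S : κ → Set σ) (F : κ → ℕ → σ → Set (List ℕ))
    (n : ℕ) : Set (List ℕ) :=
  {t | ∀ k, n ∈ η k → ∃ s ∈ S k, t ∈ F k n s}

namespace WeakShrinkWrapper

variable {κ σ : Type*} {η : κ → Set ℕ} {S : κ → Set σ} {X : ℕ → ℕ → ℕ}
  {F : κ → ℕ → σ → Set (List ℕ)}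

theorem mem_branches_wrapTree (hW : WeakShrinkWrapper η S X F) (n : ℕ) :
    X n ∈ Branches (wrapTree η S F n) := fun l _ hn =>
  let ⟨s, hs, hXs⟩ := hW.exists_mem_branches hn
  ⟨s, hs, hXs l⟩

theorem exists_mem_branches_of_mem_wrapTree (hW : WeakShrinkWrapper η S X F) {k : κ} {n : ℕ}
    (hn : n ∈ η k) {x : ℕ → ℕ} (hx : x ∈ Branches (wrapTree η S F n)) :
    ∃ s ∈ S k, x ∈ Branches (F k n s) := by
  have hsub : wrapTree η S F n ⊆ ⋃ s ∈ S k, F k n s := fun t ht => mem_iUnion₂.2 <| by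
    simpa only [exists_prop] using ht k hn
  have hxU := branches_mono hsub hx
  rw [branches_biUnion (hW.finite_labels k) fun _ hs => hW.isTree hn hs] at hxU
  simpa only [mem_iUnion₂, exists_prop] using hxU

theorem eq_or_fSeq_le (hW : WeakShrinkWrapper η S X F) {k : κ} {m n b : ℕ} (hm : m ∈ η k)
    (hn : n ∈ η k) (hmn : m < n)
    (hb : ∀ s₁ ∈ S k, ∀ s₂ ∈ S k, Disjoint (Branches (F k m s₁)) (Branches (F k n s₂)) →
      ∀ y₁ ∈ Branches (F k m s₁), ∀ y₂ ∈ Branches (F k n s₂), ∃ i < b, y₁ i ≠ y₂ i)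
    {x : ℕ → ℕ} (hx : x ∈ Branches (wrapTree η S F m)) :
    X m = X n ∨ fSeq X x n ≤ b := by
  obtain ⟨s₁, hs₁, hx₁⟩ := hW.exists_mem_branches_of_mem_wrapTree hm hx
  obtain ⟨s₂, hs₂, hX₂⟩ := hW.exists_mem_branches hn
  obtain heq | hsub | hdisj := hW.eq_or_subsingleton_or_disjoint hm hn hmn hs₁ hs₂
  · exact .inl (heq hX₂)
  · have hxX : x = X n := hsub (.inl hx₁) (.inr hX₂)
    exact .inr ((fSeq_eq_zero_of_eq hxX).trans_le b.zero_le)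
  · obtain ⟨i, hib, hne⟩ := hb s₁ hs₁ s₂ hs₂ hdisj x hx₁ (X n) hX₂
    exact .inr ((fSeq_le_of_ne hne).trans hib.le)

end WeakShrinkWrapper

theorem shrink_wrapper_dominates_general {κ σ : Type*} {η : κ → Set ℕ} {S : κ → Set σ}
    {X : ℕ → ℕ → ℕ} {F : κ → ℕ → σ → Set (List ℕ)} (hW : WeakShrinkWrapper η S X F)
    (hη : ∀ m n, m < n → ∃ k, m ∈ η k ∧ n ∈ η k) {e : ℕ → ℕ}
    (he : ∀ k, ∀ m ∈ η k, ∀ n ∈ η k, m < n → ∀ s₁ ∈ S k, ∀ s₂ ∈ S k,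
      Disjoint (Branches (F k m s₁)) (Branches (F k n s₂)) →
      ∀ y₁ ∈ Branches (F k m s₁), ∀ y₂ ∈ Branches (F k n s₂), ∃ i < e n, y₁ i ≠ y₂ i)
    (x : ℕ → ℕ) :
    ∀ᶠ n in atTop, fSeq X x n ≤ max (exitLevel (wrapTree η S F n) x) (max (e n) n) := by
  by_cases hx : ∃ m, x ∈ Branches (wrapTree η S F m)
  · obtain ⟨m, hm⟩ := hx
    filter_upwards [eventually_gt_atTop m, eventually_ge_atTop (fSeq X x m)] with n hmn hn
    obtain ⟨k, hmk, hnk⟩ := hη m n hmn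
    refine le_max_of_le_right (le_max_iff.2 ?_)
    obtain heq | hle := hW.eq_or_fSeq_le hmk hnk hmn (he k m hmk n hnk hmn) hm
    · have hfSeq : fSeq X x n = fSeq X x m := by rw [fSeq, fSeq, heq]
      exact .inr (hfSeq.trans_le hn)
    · exact .inl hle
  · exact .of_forall fun n => le_max_of_le_left <|
      fSeq_le_exitLevel (hW.mem_branches_wrapTree n) fun hn => hx ⟨n, hn⟩

theorem eq_pair_of_mem_of_card_eq_two {α : Type*} [DecidableEq α] {P : Finset α} {a b : α}
    (hP : P.card = 2) (ha : a ∈ P) (hb : b ∈ P) (hab : a ≠ b) : P = {a, b} := by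
  refine (Finset.eq_of_subset_of_card_le ?_ ?_).symm
  · exact Finset.insert_subset ha (Finset.singleton_subset_iff.2 hb)
  · rw [hP, Finset.card_pair hab]

theorem ShrinkWrapper.weak {η : ℕ → Finset ℕ} (hηcard : ∀ k, (η k).card = 2) {f : ℕ → ℕ → ℕ}
    {Φ : List Bool → ℕ → ℕ} {X : ℕ → ℕ → ℕ} {F : ℕ → ℕ → List Bool → Set (List ℕ)}
    {I : ℕ → Set (ℕ → ℕ)} (hW : ShrinkWrapper η f Φ X F I) :
    WeakShrinkWrapper (fun k => (η k : Set ℕ)) (fun k => {s | s.length = k}) X F := by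
  obtain ⟨-, htree, hmem, htri⟩ := hW
  refine ⟨List.finite_length_eq Bool, fun k n s hn hs => (htree k n s hn hs).1,
    fun k n hn => hmem k n hn, fun k m n s₁ s₂ hm hn hmn hs₁ hs₂ => ?_⟩
  have hpair := eq_pair_of_mem_of_card_eq_two (hηcard k) hm hn hmn.ne
  obtain ⟨-, heq⟩ | ⟨y, -, h₁, h₂⟩ | hdisj := htri k m n s₁ s₂ hpair hmn.ne hs₁ hs₂
  · exact .inl fun hX => heq (.inr hX)
  · refine .inr (.inl ?_)
    rw [h₁, h₂, union_self]
    exact subsingleton_singleton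
  · exact .inr (.inr (disjoint_iff_inter_eq_empty.2 hdisj))

/-- If `W = (F, I)` is a shrink wrapper for `X`, `T_n = ⋂ {⋃_{s ∈ 2^nn} F nn n s : n ∈ η nn}`,
and `e` bounds the separation levels of disjoint pairs of wrapped sets, then
`g(x)(n) = max(Exit(T_n)(x), e n, n)` pointwise eventually dominates `f_X`. -/
theorem shrink_wrapper_dominates
    (η : ℕ → Finset ℕ) (hηcard : ∀ nn, (η nn).card = 2)
    (hηbij : ∀ P : Finset ℕ, P.card = 2 → ∃! nn, η nn = P)
    (f : ℕ → ℕ → ℕ) (hfpos : ∀ i l, 0 < f i l)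
    (hffin : ∀ m : ℕ, {q : ℕ × ℕ | f q.1 q.2 = m}.Finite)
    (Φ : List Bool → ℕ → ℕ)
    (hΦfin : ∀ m : ℕ, {q : List Bool × ℕ | Φ q.1 q.2 = m}.Finite)
    (X : ℕ → ℕ → ℕ) (F : ℕ → ℕ → List Bool → Set (List ℕ)) (I : ℕ → Set (ℕ → ℕ))
    (hW : ShrinkWrapper η f Φ X F I)
    (T : ℕ → Set (List ℕ))
    (hT : ∀ n, T n =
      {t | ∀ nn : ℕ, n ∈ η nn → ∃ s : List Bool, s.length = nn ∧ t ∈ F nn n s})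
    (e : ℕ → ℕ)
    (he : ∀ nn n₁ n₂ : ℕ, ∀ s₁ s₂ : List Bool, n₁ < n₂ → η nn = {n₁, n₂} →
      s₁.length = nn → s₂.length = nn →
      Branches (F nn n₁ s₁) ∩ Branches (F nn n₂ s₂) = ∅ →
      ∀ y₁ ∈ Branches (F nn n₁ s₁), ∀ y₂ ∈ Branches (F nn n₂ s₂),
        ∃ i < e n₂, y₁ i ≠ y₂ i)
    (g : (ℕ → ℕ) → ℕ → ℕ)
    (hg : ∀ x n, g x n = max (exitLevel (T n) x) (max (e n) n)) :
    ∀ x : ℕ → ℕ, ∀ᶠ n in Filter.atTop, fSeq X x n ≤ g x n := by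
  obtain rfl : T = wrapTree (fun k => (η k : Set ℕ)) (fun k => {s | s.length = k}) F := funext hT
  intro x
  simp only [hg]
  refine shrink_wrapper_dominates_general (hW.weak hηcard) (fun m n hmn => ?_)
    (fun k m hm n hn hmn s₁ hs₁ s₂ hs₂ hdisj => he k m n s₁ s₂ hmn
      (eq_pair_of_mem_of_card_eq_two (hηcard k) hm hn hmn.ne) hs₁ hs₂ hdisj.inter_eq) x
  obtain ⟨k, hk, -⟩ := hηbij {m, n} (Finset.card_pair hmn.ne)
  exact ⟨k, by simp [hk], by simp [hk]⟩
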